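/- Let n = p + q be even, let S be an adjoint set of multi-indices (a family of 2^{n−1} subsets of {1,…,n} containing exactly one of each complementary pair {A, {1,…,n}∖A}), and fix an ordered multi-index A ⊆ {1,…,n} with |A| even and A ≠ ∅. Then e^A commutes with exactly 2^{n−2} of the basis elements {e^B : B ∈ S}, anticommutes with exactly 2^{n−2} of the basis elements {e^B : B ∈ S}, commutes with exactly 2^{n−2} of the basis elements {e^B : B ∉ S}, and anticommutes with exactly 2^{n−2} of the basis elements {e^B : B ∉ S}. -/

import Mathlib

/-! Since `e^A` and `e^B` are products of pairwise anticommuting generators, reordering gives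
`e^A e^B = (-1)^k e^B e^A` with `k + |A ∩ B| = |A||B|` (`eB_mul_eB`). The generators square to
`±1`, so `e^A` and `e^B` are units, `e^A e^B ≠ 0`, and for `|A|` even the two basis elements
commute if `|A ∩ B|` is even and anticommute if it is odd, never both (`commute_iff`,
`anticommute_iff`).

The rest is counting. For a fixed `a ∈ A`, toggling the membership of `a` in `B` changes the parity
of `|A ∩ B|`, so each parity class has `2^(n-1)` members. As `|A|` is even, complementation
`B ↦ Bᶜ` preserves the parity of `|A ∩ B|`, while it exchanges `S` with its complement family;
hence `S` takes exactly half of each class (`four_mul_card`). -/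

open CliffordAlgebra

/-- Diagonal metric with `p` entries `+1` and `q` entries `-1`. -/
noncomputable def eta (p q : ℕ) : Fin (p + q) → ℝ :=
  fun a => if (a : ℕ) < p then 1 else -1

/-- The quadratic form of signature `(p, q)` on `ℝⁿ`, `n = p + q`. -/
noncomputable def Qpq (p q : ℕ) : QuadraticForm ℝ (Fin (p + q) → ℝ) :=
  QuadraticMap.weightedSumSquares ℝ (eta p q)

/-- The real Clifford algebra `Cl(p, q)`. -/
noncomputable abbrev Cl (p q : ℕ) : Type :=
  CliffordAlgebra (Qpq p q)

/-- The generator `e^a` of `Cl(p, q)`. -/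
noncomputable def gen (p q : ℕ) (a : Fin (p + q)) : Cl p q :=
  CliffordAlgebra.ι (Qpq p q) (Pi.single a 1)

/-- The basis element `e^A`: the product of the generators `e^a`, `a ∈ A`,
taken in increasing order (`e^∅ = 1`). -/
noncomputable def eB (p q : ℕ) (A : Finset (Fin (p + q))) : Cl p q :=
  ((A.sort (· ≤ ·)).map (gen p q)).prod

theorem gen_mul_gen {p q : ℕ} {a b : Fin (p + q)} (h : a ≠ b) :
    gen p q a * gen p q b = -(gen p q b * gen p q a) := by
  rw [eq_neg_iff_add_eq_zero]
  unfold gen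
  rw [CliffordAlgebra.ι_mul_ι_add_swap]
  suffices QuadraticMap.polar (Qpq p q) (Pi.single a 1) (Pi.single b 1) = 0 by
    rw [this, map_zero]
  simp only [QuadraticMap.polar, Qpq, QuadraticMap.weightedSumSquares_apply,
    ← Finset.sum_sub_distrib]
  refine Finset.sum_eq_zero fun i _ => ?_
  by_cases hi : i = a
  · subst hi
    simp [Pi.single_eq_of_ne h]
  · simp [Pi.single_eq_of_ne hi]

theorem isUnit_gen (p q : ℕ) (a : Fin (p + q)) : IsUnit (gen p q a) := by
  have hQ : Qpq p q (Pi.single a 1) = eta p q a := by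
    rw [Qpq, QuadraticMap.weightedSumSquares_apply, Finset.sum_eq_single a]
    · simp
    · intro b _ hb
      simp [Pi.single_eq_of_ne hb]
    · simp
  have hu : IsUnit (gen p q a * gen p q a) := by
    rw [gen, CliffordAlgebra.ι_sq_scalar, hQ]
    refine IsUnit.map _ (isUnit_iff_ne_zero.2 ?_)
    unfold eta
    split_ifs <;> norm_num
  exact ((Commute.refl _).isUnit_mul_iff.1 hu).1

theorem isUnit_eB (p q : ℕ) (A : Finset (Fin (p + q))) : IsUnit (eB p q A) := by
  refine List.prod_isUnit fun m hm => ?_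
  obtain ⟨a, -, rfl⟩ := List.mem_map.1 hm
  exact isUnit_gen p q a

/-- Moving one generator `e^a` past a product of generators gives a factor `-1` for each
generator different from `e^a`. -/
theorem gen_mul_prod {p q : ℕ} (a : Fin (p + q)) (l : List (Fin (p + q))) :
    gen p q a * (l.map (gen p q)).prod =
      (-1 : ℝ) ^ (l.countP (· ≠ a)) • ((l.map (gen p q)).prod * gen p q a) := by
  induction l with
  | nil => simp
  | cons b l ih =>
    rw [List.map_cons, List.prod_cons, List.countP_cons]
    by_cases h : b = a
    · subst h
      rw [mul_assoc, ih]
      simp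
    · rw [← mul_assoc, gen_mul_gen (Ne.symm h), neg_mul, mul_assoc, ih]
      simp [h, pow_succ, mul_assoc]

theorem prod_mul_prod {p q : ℕ} (k l : List (Fin (p + q))) :
    (k.map (gen p q)).prod * (l.map (gen p q)).prod =
      (-1 : ℝ) ^ (k.map fun a => l.countP (· ≠ a)).sum •
        ((l.map (gen p q)).prod * (k.map (gen p q)).prod) := by
  induction k with
  | nil => simp
  | cons a k ih =>
    simp only [List.map_cons, List.prod_cons, List.sum_cons]
    rw [mul_assoc, ih, mul_smul_comm, ← mul_assoc, gen_mul_prod, smul_mul_assoc, smul_smul,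
      ← pow_add, mul_assoc, add_comm (List.sum _)]

/-- The commutation rule `e^A e^B = (-1)^k e^B e^A`, where `k = |A||B| - |A ∩ B|`. -/
theorem eB_mul_eB {p q : ℕ} (A B : Finset (Fin (p + q))) :
    ∃ k : ℕ, k + (A ∩ B).card = A.card * B.card ∧
      eB p q A * eB p q B = (-1 : ℝ) ^ k • (eB p q B * eB p q A) := by
  refine ⟨_, ?_, prod_mul_prod _ _⟩
  have hc : ∀ a, (B.sort (· ≤ ·)).countP (· ≠ a) = (B.filter (· ≠ a)).card := by
    intro a
    rw [← Multiset.coe_countP, Finset.sort_eq, Multiset.countP_eq_card_filter]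
    simp [Finset.card_def]
  have hs : ((A.sort (· ≤ ·)).map fun a => (B.sort (· ≤ ·)).countP (· ≠ a)).sum =
      ∑ a ∈ A, (B.filter (· ≠ a)).card := by
    simp only [hc]
    rw [← Multiset.sum_coe, ← Multiset.map_coe, Finset.sort_eq]
    rfl
  have hi : (A ∩ B).card = ∑ a ∈ A, (B.filter (· = a)).card := by
    rw [← Finset.filter_mem_eq_inter, Finset.card_filter]
    refine Finset.sum_congr rfl fun a _ => ?_
    rw [Finset.filter_eq']
    split_ifs <;> simp
  rw [hs, hi, ← Finset.sum_add_distrib, ← smul_eq_mul, ← Finset.sum_const]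
  refine Finset.sum_congr rfl fun a _ => ?_
  rw [add_comm]
  exact Finset.card_filter_add_card_filter_not (· = a)

theorem eB_mul_eB_of_even {p q : ℕ} {A : Finset (Fin (p + q))} (hA : Even A.card)
    (B : Finset (Fin (p + q))) :
    eB p q A * eB p q B = (-1 : ℝ) ^ (A ∩ B).card • (eB p q B * eB p q A) := by
  obtain ⟨k, hk, h⟩ := eB_mul_eB A B
  have he : Even (k + (A ∩ B).card) := hk ▸ hA.mul_right _
  rw [h, neg_one_pow_congr (Nat.even_add.1 he)]

/-- The products `e^B e^A` are units of a nontrivial real algebra, hence differ from their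
negatives. -/
theorem eB_mul_eB_ne_neg {p q : ℕ} (A B : Finset (Fin (p + q))) :
    eB p q B * eB p q A ≠ -(eB p q B * eB p q A) := by
  intro h
  have h2 : (2 : ℝ) • (eB p q B * eB p q A) = 0 := by
    rw [two_smul]
    exact eq_neg_iff_add_eq_zero.1 h
  exact ((isUnit_eB p q B).mul (isUnit_eB p q A)).ne_zero
    ((smul_eq_zero.1 h2).resolve_left two_ne_zero)

theorem commute_iff {p q : ℕ} {A : Finset (Fin (p + q))} (hA : Even A.card)
    (B : Finset (Fin (p + q))) :
    Commute (eB p q A) (eB p q B) ↔ Even (A ∩ B).card := by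
  rw [commute_iff_eq, eB_mul_eB_of_even hA]
  rcases Nat.even_or_odd (A ∩ B).card with h | h
  · simp [h]
  · simpa [h.neg_one_pow, Nat.not_even_iff_odd.2 h] using (eB_mul_eB_ne_neg A B).symm

theorem anticommute_iff {p q : ℕ} {A : Finset (Fin (p + q))} (hA : Even A.card)
    (B : Finset (Fin (p + q))) :
    eB p q A * eB p q B = -(eB p q B * eB p q A) ↔ ¬ Even (A ∩ B).card := by
  rw [eB_mul_eB_of_even hA]
  rcases Nat.even_or_odd (A ∩ B).card with h | h
  · simpa [h] using eB_mul_eB_ne_neg A B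
  · simp [h.neg_one_pow, h]

/-- Toggling the membership of an element of `A` changes the parity of `|A ∩ B|`. -/
theorem even_card_inter_symmDiff {m : ℕ} {A : Finset (Fin m)} {a : Fin m} (ha : a ∈ A)
    (B : Finset (Fin m)) :
    Even (A ∩ symmDiff B {a}).card ↔ ¬ Even (A ∩ B).card := by
  by_cases hb : a ∈ B
  · have h1 : A ∩ symmDiff B {a} = (A ∩ B).erase a := by
      ext x
      by_cases hx : x = a <;> simp [Finset.mem_symmDiff, hx, hb]
    rw [h1, ← Finset.card_erase_add_one (Finset.mem_inter.2 ⟨ha, hb⟩), Nat.even_add_one, not_not]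
  · have h1 : A ∩ symmDiff B {a} = insert a (A ∩ B) := by
      ext x
      by_cases hx : x = a <;> simp [Finset.mem_symmDiff, hx, hb, ha]
    rw [h1, Finset.card_insert_of_notMem (by simp [hb]), Nat.even_add_one]

theorem even_card_inter_compl {m : ℕ} {A : Finset (Fin m)} (hA : Even A.card)
    (B : Finset (Fin m)) : Even (A ∩ Bᶜ).card ↔ Even (A ∩ B).card := by
  have h : (A ∩ B).card + (A ∩ Bᶜ).card = A.card := by
    rw [← Finset.sdiff_eq_inter_compl]
    exact Finset.card_inter_add_card_sdiff A B
  rw [← h, Nat.even_add] at hA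
  exact hA.symm

theorem two_mul_card_parity {m : ℕ} {A : Finset (Fin m)} (hA1 : A ≠ ∅) :
    2 * {B : Finset (Fin m) | Even (A ∩ B).card}.ncard = 2 ^ m ∧
      2 * {B : Finset (Fin m) | ¬ Even (A ∩ B).card}.ncard = 2 ^ m := by
  obtain ⟨a, ha⟩ := Finset.nonempty_iff_ne_empty.2 hA1
  have heq : {B : Finset (Fin m) | Even (A ∩ B).card}.ncard =
      {B : Finset (Fin m) | ¬ Even (A ∩ B).card}.ncard :=
    Set.ncard_congr (fun B _ => symmDiff B {a})
      (fun B hB => by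
        simp only [Set.mem_ofPred_eq] at hB ⊢
        rw [even_card_inter_symmDiff ha, not_not]
        exact hB)
      (fun B C _ _ h => symmDiff_left_injective _ h)
      (fun B hB => ⟨symmDiff B {a}, (even_card_inter_symmDiff ha B).2 hB,
        symmDiff_symmDiff_cancel_right _ _⟩)
  have hsum := Set.ncard_add_ncard_compl {B : Finset (Fin m) | Even (A ∩ B).card}
  rw [Set.compl_ofPred, Nat.card_eq_fintype_card, Fintype.card_finset, Fintype.card_fin] at hsum
  omega

/-- An adjoint set contains half of every family of multi-indices closed under complementation. -/
theorem two_mul_card {m : ℕ} {S : Finset (Finset (Fin m))} (hS : ∀ B, B ∈ S ↔ Bᶜ ∉ S)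
    {P : Finset (Fin m) → Prop} (hP : ∀ B, P Bᶜ ↔ P B) :
    2 * {B | B ∈ S ∧ P B}.ncard = {B | P B}.ncard ∧
      2 * {B | B ∉ S ∧ P B}.ncard = {B | P B}.ncard := by
  have heq : {B | B ∈ S ∧ P B}.ncard = {B | B ∉ S ∧ P B}.ncard :=
    Set.ncard_congr (fun B _ => Bᶜ)
      (fun B hB => ⟨(hS B).1 hB.1, (hP B).2 hB.2⟩)
      (fun B C _ _ h => compl_injective h)
      (fun B hB => ⟨Bᶜ, ⟨(hS _).2 (by rw [compl_compl]; exact hB.1), (hP B).2 hB.2⟩,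
        compl_compl B⟩)
  have hsum := Set.ncard_inter_add_ncard_sdiff_eq_ncard {B | P B} {B | B ∈ S}
  have h1 : {B | P B} ∩ {B | B ∈ S} = {B | B ∈ S ∧ P B} := by
    ext B; exact and_comm
  have h2 : {B | P B} \ {B | B ∈ S} = {B | B ∉ S ∧ P B} := by
    ext B; exact and_comm
  rw [h1, h2] at hsum
  omega

theorem four_mul_card {m : ℕ} {S : Finset (Finset (Fin m))} (hS : ∀ B, B ∈ S ↔ Bᶜ ∉ S)
    {A : Finset (Fin m)} (hA : Even A.card) (hA1 : A ≠ ∅) :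
    4 * {B | B ∈ S ∧ Even (A ∩ B).card}.ncard = 2 ^ m ∧
      4 * {B | B ∈ S ∧ ¬ Even (A ∩ B).card}.ncard = 2 ^ m ∧
      4 * {B | B ∉ S ∧ Even (A ∩ B).card}.ncard = 2 ^ m ∧
      4 * {B | B ∉ S ∧ ¬ Even (A ∩ B).card}.ncard = 2 ^ m := by
  have h1 := two_mul_card hS (P := fun B => Even (A ∩ B).card) (even_card_inter_compl hA)
  have h2 := two_mul_card hS (P := fun B => ¬ Even (A ∩ B).card)
    fun B => not_congr (even_card_inter_compl hA B)
  have h3 := two_mul_card_parity hA1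
  omega

/-- For even `n`, an adjoint set `S` of multi-indices (one of each complementary pair
`{B, Bᶜ}`) and a multi-index `A` with `|A|` even and `A ≠ ∅`: `e^A` commutes with
exactly `2^{n−2}` of the `e^B`, `B ∈ S`, anticommutes with exactly `2^{n−2}` of the
`e^B`, `B ∈ S`, commutes with exactly `2^{n−2}` of the `e^B`, `B ∉ S`, and
anticommutes with exactly `2^{n−2}` of the `e^B`, `B ∉ S`. -/
theorem count_commuting_adjoint_even (p q : ℕ) (hn : 2 ≤ p + q) (hev : Even (p + q))
    (S : Finset (Finset (Fin (p + q)))) (hS : ∀ B, B ∈ S ↔ Bᶜ ∉ S)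
    (A : Finset (Fin (p + q))) (hAcard : Even A.card) (hA1 : A ≠ ∅) :
    {B : Finset (Fin (p + q)) |
        B ∈ S ∧ Commute (eB p q A) (eB p q B)}.ncard = 2 ^ (p + q - 2) ∧
    {B : Finset (Fin (p + q)) |
        B ∈ S ∧ eB p q A * eB p q B = -(eB p q B * eB p q A)}.ncard = 2 ^ (p + q - 2) ∧
    {B : Finset (Fin (p + q)) |
        B ∉ S ∧ Commute (eB p q A) (eB p q B)}.ncard = 2 ^ (p + q - 2) ∧
    {B : Finset (Fin (p + q)) |
        B ∉ S ∧ eB p q A * eB p q B = -(eB p q B * eB p q A)}.ncard =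
      2 ^ (p + q - 2) := by
  simp only [commute_iff hAcard, anticommute_iff hAcard]
  have h := four_mul_card hS hAcard hA1
  have h4 : 2 ^ (p + q) = 4 * 2 ^ (p + q - 2) := by
    rw [show 4 = 2 ^ 2 from rfl, ← pow_add, Nat.add_sub_cancel' hn]
  omega
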